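/- Let m ≥ 2 and let F(x) = −ln det(x) be the log-determinant barrier on the cone S^m_{++} of symmetric positive definite m×m real matrices. Then for all x, s ∈ S^m_{++}, 1/λ_min(s^{1/2} x s^{1/2}) ≤ ρ_m·(tr(x^{-1}s^{-1}) − m(m−1)/tr(xs)), and ρ_m is the smallest constant for which this holds for all x, s ∈ S^m_{++}. Equivalently, the supremum over x, s ∈ S^m_{++} of [1/λ_min(s^{1/2} x s^{1/2})] / [tr(x^{-1}s^{-1}) − m(m−1)/tr(xs)] equals ρ_m. -/

import Mathlib

open scoped BigOperators
open Matrix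
open scoped MatrixOrder

noncomputable section

/-- The smallest eigenvalue of a matrix `M` (for real symmetric `M` this is the usual
minimal eigenvalue `λ_min(M)`). -/
def minEig {m : ℕ} (M : Matrix (Fin m) (Fin m) ℝ) : ℝ :=
  sInf {r : ℝ | ∃ v : Fin m → ℝ, v ≠ 0 ∧ M *ᵥ v = r • v}

/-!
By conjugation, only the eigenvalues `v` of `s^{1/2} x s^{1/2}` matter. Weighted Cauchy–Schwarz, in
the form `(∑ wᵢ)² / ∑ vᵢ ≤ ∑ wᵢ² / vᵢ`, with weight `1 - c` at a smallest eigenvalue and `1` at the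
others, bounds `c (2 - c) / min v` by `∑ 1 / vᵢ - (m - c)² / ∑ vᵢ`. The choice `c = τ / (τ + 1)`
makes `(m - c)² = m (m - 1)` and `c (2 - c) = 1 / ρ`. Equality holds when `v` is proportional to
the weights, so `x = diag(1 - c, 1, …, 1)`, `s = 1` shows that `ρ` is optimal.
-/

section Scalar

/-- The constant `τ_N = √(N / (N - 1))`, meaningful for `N ≥ 2`. -/
def tau (N : ℕ) : ℝ := √((N : ℝ) / ((N : ℝ) - 1))

/-- The constant `ρ_N = (τ_N + 1)² / (τ_N (τ_N + 2))`, the optimal factor for the log-determinant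
barrier on `N × N` matrices. -/
def rho (N : ℕ) : ℝ := (tau N + 1) ^ 2 / (tau N * (tau N + 2))

/-- The amount `c = τ_N / (τ_N + 1)` by which the extremal spectrum `(1 - c, 1, …, 1)` deviates from
`(1, …, 1)`; for `N ≥ 2`, equivalently `c = N - √(N (N - 1))`. -/
def spectralDip (N : ℕ) : ℝ := tau N / (tau N + 1)

variable {N : ℕ}

theorem tau_pos (hN : 1 < N) : 0 < tau N :=
  have hN₀ : (1 : ℝ) < N := by exact_mod_cast hN
  Real.sqrt_pos.2 (div_pos (by linarith) (by linarith))

theorem tau_sq_mul_sub_one (hN : 1 < N) : tau N ^ 2 * ((N : ℝ) - 1) = N := by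
  have hN₀ : (0 : ℝ) < (N : ℝ) - 1 := sub_pos.2 (by exact_mod_cast hN)
  rw [tau, Real.sq_sqrt (by positivity), div_mul_cancel₀ _ hN₀.ne']

theorem spectralDip_pos (hN : 1 < N) : 0 < spectralDip N :=
  have := tau_pos hN
  div_pos this (by linarith)

theorem spectralDip_lt_one (N : ℕ) : spectralDip N < 1 :=
  have hτ : 0 ≤ tau N := Real.sqrt_nonneg _
  (div_lt_one (by linarith)).2 (by linarith)

theorem sub_spectralDip_sq (hN : 1 < N) :
    ((N : ℝ) - spectralDip N) ^ 2 = N * ((N : ℝ) - 1) := by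
  have hτ := tau_pos hN
  have hτN := tau_sq_mul_sub_one hN
  have h : (N : ℝ) - spectralDip N = ((N : ℝ) - 1) * tau N := by
    unfold spectralDip
    field_simp
    linear_combination -hτN
  rw [h]
  linear_combination ((N : ℝ) - 1) * hτN

theorem rho_pos (hN : 1 < N) : 0 < rho N := by
  have hτ := tau_pos hN
  unfold rho
  positivity

theorem inv_rho (N : ℕ) : (rho N)⁻¹ = spectralDip N * (2 - spectralDip N) := by
  have hτ : tau N + 1 ≠ 0 := (add_pos_of_nonneg_of_pos (Real.sqrt_nonneg _) one_pos).ne'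
  rw [rho, inv_div, spectralDip]
  field_simp
  ring

end Scalar

section CauchySchwarz

variable {ι K : Type*} [DecidableEq ι] [Field K] (j : ι) (c : K)

theorem one_sub_single_pos [LinearOrder K] [IsStrictOrderedRing K] {c : K} (hc : c < 1) (i : ι) :
    0 < (1 - Pi.single j c : ι → K) i := by
  rcases eq_or_ne i j with rfl | hi <;> simp [*]

variable [Fintype ι]

theorem sum_one_sub_single :
    ∑ i, (1 - Pi.single j c : ι → K) i = Fintype.card ι - c := by
  simp [Finset.sum_sub_distrib]

theorem sum_one_sub_single_sq_div (v : ι → K) :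
    ∑ i, (1 - Pi.single j c : ι → K) i ^ 2 / v i = ∑ i, (v i)⁻¹ - c * (2 - c) / v j := by
  have h (i : ι) : (1 - Pi.single j c : ι → K) i ^ 2 / v i =
      (v i)⁻¹ - (Pi.single j (c * (2 - c) / v j) : ι → K) i := by
    rcases eq_or_ne i j with rfl | hi
    · simp only [Pi.sub_apply, Pi.one_apply, Pi.single_eq_same]
      ring
    · simp [hi]
  simp only [h, Finset.sum_sub_distrib, Finset.sum_pi_single', Finset.mem_univ, if_true]

theorem sum_inv_sub_of_one_sub_single :
    ∑ i, ((1 - Pi.single j c : ι → K) i)⁻¹ -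
        (Fintype.card ι - c) ^ 2 / ∑ i, (1 - Pi.single j c : ι → K) i = c * (2 - c) / (1 - c) := by
  have h := sum_one_sub_single_sq_div j c (1 - Pi.single j c)
  simp only [sq, mul_self_div_self, sum_one_sub_single] at h ⊢
  simp only [Pi.sub_apply, Pi.one_apply, Pi.single_eq_same] at h ⊢
  linear_combination -h

omit [DecidableEq ι] in
theorem mul_two_sub_div_le_sum_inv_sub [LinearOrder K] [IsStrictOrderedRing K] {v : ι → K}
    (hv : ∀ i, 0 < v i) :
    c * (2 - c) / v j ≤ ∑ i, (v i)⁻¹ - (Fintype.card ι - c) ^ 2 / ∑ i, v i := by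
  classical
  have h := Finset.sq_sum_div_le_sum_sq_div Finset.univ (1 - Pi.single j c) fun i _ => hv i
  rw [sum_one_sub_single, sum_one_sub_single_sq_div] at h
  linarith

end CauchySchwarz

section Matrix

open RCLike
open scoped ComplexOrder

variable {𝕜 n : Type*} [RCLike 𝕜] [Fintype n] [DecidableEq n]

theorem minEig_eq_sInf_spectrum {m : ℕ} (M : Matrix (Fin m) (Fin m) ℝ) :
    minEig M = sInf (spectrum ℝ M) := by
  unfold minEig
  congr 1
  ext r
  rw [← Matrix.spectrum_toLin', ← Module.End.hasEigenvalue_iff_mem_spectrum]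
  constructor
  · rintro ⟨v, hv, h⟩
    exact Module.End.hasEigenvalue_of_hasEigenvector (x := v)
      ⟨Module.End.mem_eigenspace_iff.2 (by rwa [toLin'_apply]), hv⟩
  · intro h
    obtain ⟨v, hv⟩ := h.exists_hasEigenvector
    exact ⟨v, hv.2, hv.apply_eq_smul⟩

theorem exists_eigenvalues_eq_sInf_spectrum [Nonempty n] {M : Matrix n n 𝕜} (hM : M.IsHermitian) :
    ∃ j, hM.eigenvalues j = sInf (spectrum ℝ M) := by
  rw [hM.spectrum_real_eq_range_eigenvalues]
  exact (Set.range_nonempty _).csInf_mem (Set.finite_range _)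

theorem trace_inv_eq_sum_inv_eigenvalues {M : Matrix n n 𝕜} (hM : M.IsHermitian)
    (hunit : IsUnit M) : M⁻¹.trace = ∑ i, (((hM.eigenvalues i)⁻¹ : ℝ) : 𝕜) := by
  have hne (i : n) : (hM.eigenvalues i : 𝕜) ≠ 0 := ofReal_ne_zero.2 fun h =>
    spectrum.zero_notMem ℝ hunit (h ▸ hM.eigenvalues_mem_spectrum_real i)
  set φ := Unitary.conjStarAlgAut 𝕜 (Matrix n n 𝕜) hM.eigenvectorUnitary with hφ
  have hinv : M⁻¹ = φ (diagonal fun i => (((hM.eigenvalues i)⁻¹ : ℝ) : 𝕜)) := by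
    refine Matrix.inv_eq_right_inv ?_
    conv_lhs => enter [1]; rw [hM.spectral_theorem]
    rw [← map_mul, diagonal_mul_diagonal]
    simp [hne]
  rw [hinv, hφ, Unitary.conjStarAlgAut_apply, trace_mul_cycle, Unitary.coe_star_mul_self, one_mul,
    trace_diagonal]

theorem spectrum_real_diagonal_ofReal (d : n → ℝ) :
    spectrum ℝ (diagonal fun i => (d i : 𝕜)) = Set.range d := by
  ext r
  rw [← spectrum.algebraMap_mem_iff 𝕜, spectrum_diagonal]
  simp

theorem inv_diagonal_of_ne_zero {K : Type*} [Field K] {d : n → K} (hd : ∀ i, d i ≠ 0) :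
    (diagonal d)⁻¹ = diagonal fun i => (d i)⁻¹ :=
  Matrix.inv_eq_right_inv (by simp [hd])

theorem sInf_spectrum_diagonal_one_sub_single (j : n) {c : ℝ} (hc : 0 ≤ c) :
    sInf (spectrum ℝ (diagonal fun i => ((1 - Pi.single j c : n → ℝ) i : 𝕜))) = 1 - c := by
  rw [spectrum_real_diagonal_ofReal]
  refine IsLeast.csInf_eq ⟨⟨j, by simp⟩, ?_⟩
  rintro _ ⟨i, rfl⟩
  rcases eq_or_ne i j with rfl | hi <;> simp [*]

theorem posDef_sqrt_mul_mul_sqrt {x s : Matrix n n 𝕜} (hx : x.PosDef) (hs : s.PosDef) :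
    (CFC.sqrt s * x * CFC.sqrt s).PosDef := by
  have hunit : IsUnit (CFC.sqrt s) := (CFC.isUnit_sqrt_iff s hs.posSemidef.nonneg).2 hs.isUnit
  have hstar : star (CFC.sqrt s) = CFC.sqrt s := (CFC.sqrt_nonneg s).isSelfAdjoint
  simpa only [hstar] using (hunit.posDef_star_left_conjugate_iff (x := x)).2 hx

/-- The proximity measure `δ_F(x, s) = tr(x⁻¹s⁻¹) - N(N - 1) / tr(xs)` of the barrier
`F = -ln det` on `N × N` Hermitian matrices. Both traces are real when `x` and `s` are Hermitian;
taking real parts makes the value a real number over any `𝕜`. -/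
def proximity (x s : Matrix n n 𝕜) : ℝ :=
  re (x⁻¹ * s⁻¹).trace -
    (Fintype.card n : ℝ) * ((Fintype.card n : ℝ) - 1) / re (x * s).trace

theorem proximity_sqrt_mul_mul_sqrt_one (x : Matrix n n 𝕜) {s : Matrix n n 𝕜} (hs : 0 ≤ s) :
    proximity (CFC.sqrt s * x * CFC.sqrt s) 1 = proximity x s := by
  have hs₂ : CFC.sqrt s * CFC.sqrt s = s := CFC.sqrt_mul_sqrt_self s hs
  have htrace : (CFC.sqrt s * x * CFC.sqrt s).trace = (x * s).trace := by
    rw [trace_mul_cycle, hs₂, trace_mul_comm]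
  have htrace_inv : (CFC.sqrt s * x * CFC.sqrt s)⁻¹.trace = (x⁻¹ * s⁻¹).trace := by
    rw [Matrix.mul_inv_rev, Matrix.mul_inv_rev, ← Matrix.mul_assoc, trace_mul_cycle,
      ← Matrix.mul_inv_rev, hs₂, trace_mul_comm]
  simp only [proximity, inv_one, mul_one, htrace, htrace_inv]

theorem proximity_one_eq_sum_eigenvalues {M : Matrix n n 𝕜} (hM : M.IsHermitian)
    (hunit : IsUnit M) :
    proximity M 1 = ∑ i, (hM.eigenvalues i)⁻¹ -
      (Fintype.card n : ℝ) * ((Fintype.card n : ℝ) - 1) / ∑ i, hM.eigenvalues i := by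
  rw [proximity, inv_one, mul_one, mul_one, trace_inv_eq_sum_inv_eigenvalues hM hunit,
    hM.trace_eq_sum_eigenvalues]
  simp only [map_sum, ofReal_re]

theorem proximity_diagonal_one {d : n → ℝ} (hd : ∀ i, d i ≠ 0) :
    proximity (diagonal fun i => (d i : 𝕜)) 1 = ∑ i, (d i)⁻¹ -
      (Fintype.card n : ℝ) * ((Fintype.card n : ℝ) - 1) / ∑ i, d i := by
  rw [proximity, inv_one, mul_one, mul_one,
    inv_diagonal_of_ne_zero fun i => ofReal_ne_zero.2 (hd i), trace_diagonal, trace_diagonal]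
  simp only [map_sum, ← ofReal_inv, ofReal_re]

variable [Nontrivial n]

theorem one_div_sInf_spectrum_le {M : Matrix n n 𝕜} (hM : M.PosDef) :
    1 / sInf (spectrum ℝ M) ≤ rho (Fintype.card n) * proximity M 1 := by
  obtain ⟨j, hj⟩ := exists_eigenvalues_eq_sInf_spectrum hM.isHermitian
  have h := mul_two_sub_div_le_sum_inv_sub j (spectralDip (Fintype.card n)) hM.eigenvalues_pos
  rw [sub_spectralDip_sq Fintype.one_lt_card, hj, ← proximity_one_eq_sum_eigenvalues _ hM.isUnit,
    div_eq_mul_one_div, ← inv_rho] at h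
  exact (inv_mul_le_iff₀ (rho_pos Fintype.one_lt_card)).1 h

theorem proximity_diagonal_one_sub_single_spectralDip (j : n) :
    proximity (diagonal fun i => ((1 - Pi.single j (spectralDip (Fintype.card n)) : n → ℝ) i : 𝕜)) 1
      = (rho (Fintype.card n))⁻¹ / (1 - spectralDip (Fintype.card n)) := by
  rw [proximity_diagonal_one fun i => (one_sub_single_pos j (spectralDip_lt_one _) i).ne',
    ← sub_spectralDip_sq Fintype.one_lt_card, sum_inv_sub_of_one_sub_single, inv_rho]

variable (𝕜 n) in
theorem stmt14_general :
    IsLeast {C : ℝ | ∀ x s : Matrix n n 𝕜, x.PosDef → s.PosDef →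
      1 / sInf (spectrum ℝ (CFC.sqrt s * x * CFC.sqrt s)) ≤ C * proximity x s}
      (rho (Fintype.card n)) := by
  refine ⟨fun x s hx hs => ?_, fun C hC => ?_⟩
  · rw [← proximity_sqrt_mul_mul_sqrt_one x hs.posSemidef.nonneg]
    exact one_div_sInf_spectrum_le (posDef_sqrt_mul_mul_sqrt hx hs)
  · obtain ⟨j⟩ := (inferInstance : Nonempty n)
    set c := spectralDip (Fintype.card n)
    have hc : 0 < c := spectralDip_pos Fintype.one_lt_card
    have hc₁ : c < 1 := spectralDip_lt_one _
    have h := hC (diagonal fun i => ((1 - Pi.single j c : n → ℝ) i : 𝕜)) 1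
      (PosDef.diagonal fun i => ofReal_pos.2 (one_sub_single_pos j hc₁ i)) PosDef.one
    rw [CFC.sqrt_one, one_mul, mul_one, sInf_spectrum_diagonal_one_sub_single j hc.le,
      proximity_diagonal_one_sub_single_spectralDip, ← mul_div_assoc,
      div_le_div_iff_of_pos_right (sub_pos.2 hc₁), ← div_eq_mul_inv,
      one_le_div (rho_pos Fintype.one_lt_card)] at h
    exact h

end Matrix

/-- For the log-determinant barrier `F(x) = −ln det x` on `S^m₊₊` (`m ≥ 2`):
for all symmetric positive definite `x, s`,
`1/λ_min(s^{1/2} x s^{1/2}) ≤ ρ_m (tr(x⁻¹s⁻¹) − m(m−1)/tr(xs))`, and `ρ_m` is the smallest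
constant for which this holds; equivalently the supremum over `x, s` of the ratio of the
two sides equals `ρ_m`. -/
theorem stmt14 (m : ℕ) (hm : 2 ≤ m) :
    let τ : ℝ := Real.sqrt ((m : ℝ) / ((m : ℝ) - 1))
    let ρ : ℝ := (τ + 1)^2 / (τ * (τ + 2))
    (∀ x s : Matrix (Fin m) (Fin m) ℝ, ∀ (_hx : x.PosDef) (hs : s.PosDef),
      1 / minEig (CFC.sqrt s * x * CFC.sqrt s) ≤
        ρ * ((x⁻¹ * s⁻¹).trace - (m : ℝ) * ((m : ℝ) - 1) / (x * s).trace)) ∧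
    (∀ c : ℝ,
      (∀ x s : Matrix (Fin m) (Fin m) ℝ, ∀ (_hx : x.PosDef) (hs : s.PosDef),
        1 / minEig (CFC.sqrt s * x * CFC.sqrt s) ≤
          c * ((x⁻¹ * s⁻¹).trace - (m : ℝ) * ((m : ℝ) - 1) / (x * s).trace)) →
      ρ ≤ c) := by
  have : Nontrivial (Fin m) := Fin.nontrivial_iff_two_le.2 hm
  simpa [IsLeast, lowerBounds, proximity, rho, tau, minEig_eq_sInf_spectrum] using
    stmt14_general ℝ (Fin m)
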